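/- Let ⟨λ₁,ν₁⟩ be a marked partition of type B of m and ⟨λ₂,ν₂⟩ a marked partition of type D of n−m, and suppose λ₁ is evenly superior to λ₂. Then ⟨λ,ν⟩ := ⟨λ₁∪λ₂, ν₁∪ν₂⟩ is a marked partition of type B of n, and d_S⟨λ,ν⟩ = d_S⟨λ₁,ν₁⟩ ∨ d_S⟨λ₂,ν₂⟩, where d_S⟨λ₁,ν₁⟩ is computed in type B and d_S⟨λ₂,ν₂⟩ in type D. -/

import Mathlib

namespace NilDual

/-- A "partition" is encoded as a multiset of natural numbers (its parts). -/
abbrev Ptn := Multiset ℕ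

/-- All parts are positive. -/
def IsPartition (l : Ptn) : Prop := ∀ a ∈ l, 0 < a

/-- `height l a` is the number of parts of `l` that are ≥ `a`. -/
def height (l : Ptn) (a : ℕ) : ℕ := Multiset.card (l.filter (fun p => a ≤ p))

/-- `psum l j` is the sum of the `j` largest parts of `l`. -/
def psum (l : Ptn) (j : ℕ) : ℕ := ∑ a ∈ Finset.Icc 1 l.sum, min j (height l a)

/-- `Dom l m` means `l ≤ m` in the dominance order. -/
def Dom (l m : Ptn) : Prop := ∀ j : ℕ, psum l j ≤ psum m j

/-- The transpose (conjugate) partition. -/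
def transpose (l : Ptn) : Ptn :=
  Multiset.filter (fun x => 0 < x)
    (Multiset.map (fun a => height l a) (Finset.Icc 1 l.sum).val)

/-- The largest part (0 for the empty partition). -/
def maxPart (l : Ptn) : ℕ := l.sup

/-- The smallest part (0 for the empty partition). -/
noncomputable def minPart (l : Ptn) : ℕ := sInf {a : ℕ | a ∈ l}

/-- `λ⁺`: add 1 to the largest part. -/
def up (l : Ptn) : Ptn := (maxPart l + 1) ::ₘ l.erase (maxPart l)

/-- `λ⁻`: subtract 1 from the smallest part, deleting it if it becomes 0. -/
noncomputable def down (l : Ptn) : Ptn :=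
  if minPart l ≤ 1 then l.erase (minPart l)
  else (minPart l - 1) ::ₘ l.erase (minPart l)

/-- The join `λ ∨ μ = (λ* ∪ μ*)*`. -/
def pjoin (l m : Ptn) : Ptn := transpose (transpose l + transpose m)

/-- `λ₋ = (λ*⁻)*`. -/
noncomputable def lowerStar (l : Ptn) : Ptn := transpose (down (transpose l))

inductive PType | B | C | D
deriving DecidableEq

/-- Parts of this parity must occur with even multiplicity in a partition of type `X`. -/
def badPart : PType → ℕ → Prop
  | PType.B, a => Even a
  | PType.C, a => Odd a
  | PType.D, a => Even a

/-- Membership in `𝒫_X` (sum unconstrained). -/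
def InP (X : PType) (l : Ptn) : Prop :=
  IsPartition l ∧ ∀ a : ℕ, badPart X a → Even (l.count a)

/-- The parity of `n` required for `𝒫_X(n)` to be defined. -/
def sumParity : PType → ℕ → Prop
  | PType.B, n => Odd n
  | PType.C, n => Even n
  | PType.D, n => Even n

/-- `m` is the X-collapse of `l`: `m ∈ 𝒫_X(|l|)`, `m ≤ l` in dominance order, and `m`
dominates every member of `𝒫_X(|l|)` that is dominated by `l`. -/
def IsCollapse (X : PType) (l m : Ptn) : Prop :=
  InP X m ∧ m.sum = l.sum ∧ Dom m l ∧
    ∀ ν : Ptn, InP X ν → ν.sum = l.sum → Dom ν l → Dom ν m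

def CollapseDefined (X : PType) (l : Ptn) : Prop := ∃ m, IsCollapse X l m

open Classical in
/-- The X-collapse `λ_X` (junk value `0` if it does not exist). -/
noncomputable def collapse (X : PType) (l : Ptn) : Ptn :=
  if h : CollapseDefined X l then h.choose else 0

/-- `l` is superior to `m`: smallest part of `l` ≥ largest part of `m`. -/
def Superior (l m : Ptn) : Prop := maxPart m ≤ minPart l

def EvenlySuperior (l m : Ptn) : Prop := ∃ k : ℕ, Even k ∧ maxPart m ≤ k ∧ k ≤ minPart l

def OddlySuperior (l m : Ptn) : Prop := ∃ k : ℕ, Odd k ∧ maxPart m ≤ k ∧ k ≤ minPart l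

/-- The parity required of marked parts in type `X`. -/
def markParity : PType → ℕ → Prop
  | PType.C, a => Even a
  | _, a => Odd a

/-- `(ν, η)` is a marked partition of type `X`, with underlying partition `λ = ν + η`. -/
def IsMarked (X : PType) (nu eta : Ptn) : Prop :=
  InP X (nu + eta) ∧ sumParity X (nu + eta).sum ∧
  (∀ a ∈ nu, nu.count a = 1 ∧ markParity X a) ∧
  ((X = PType.B ∨ X = PType.D) → Even (Multiset.card nu))

/-- The Sommers duality map `d_S` on marked partitions `(ν, η)`. -/
noncomputable def dS (X : PType) (nu eta : Ptn) : Ptn :=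
  match X with
  | PType.B => collapse PType.C (transpose (nu + collapse PType.C (down eta)))
  | PType.C => collapse PType.B (transpose (nu + collapse PType.B (up eta)))
  | PType.D =>
      collapse PType.D (transpose (nu + transpose (collapse PType.D (transpose eta))))

/-- `a` is a markable part of `l` in type `X`. -/
def Markable (X : PType) (l : Ptn) (a : ℕ) : Prop :=
  a ∈ l ∧ markParity X a ∧
    (match X with
     | PType.B => Odd (height l a)
     | PType.C => Even (height l a)
     | PType.D => Even (height l a))

/-- The marked partition `⟨l, ν⟩` is reduced. -/
def Reduced (X : PType) (l nu : Ptn) : Prop := ∀ a ∈ nu, Markable X l a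

/-- The parts entering the definition of a special marked partition:
even of odd height (B), odd of even height (C), even of even height (D). -/
def AntiPart (X : PType) (l : Ptn) (a : ℕ) : Prop :=
  match X with
  | PType.B => Even a ∧ Odd (height l a)
  | PType.C => Odd a ∧ Even (height l a)
  | PType.D => Even a ∧ Even (height l a)

/-- The reduced marked partition `⟨l, ν⟩` is special. -/
def SpecialMP (X : PType) (l nu : Ptn) : Prop :=
  ∀ a ∈ l, AntiPart X l a → Even (height nu a)

/-- `a` is the largest part of `l` whose height satisfies `P`. -/
def LargestWith (l : Ptn) (P : ℕ → Prop) (a : ℕ) : Prop :=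
  a ∈ l ∧ P (height l a) ∧ ∀ b ∈ l, P (height l b) → b ≤ a

/-- Height parity for the top marked part in a basic block. -/
def heightParity : PType → ℕ → Prop
  | PType.B => fun n => Odd n
  | _ => fun n => Even n

/-- A basic block of type `X`. -/
def BasicBlock (X : PType) (nu eta : Ptn) : Prop :=
  IsMarked X nu eta ∧
  ((∃ n1 n2 : ℕ, n1 < n2 ∧ nu = {n2, n1} ∧ n1 = minPart (nu + eta) ∧
      LargestWith (nu + eta) (heightParity X) n2) ∨
   (X = PType.C ∧ ∃ n2 : ℕ, nu = {n2} ∧ LargestWith (nu + eta) (heightParity X) n2))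

/-- An ultrabasic block: a basic block with `n₁ ≤ 1`. -/
def Ultrabasic (X : PType) (nu eta : Ptn) : Prop :=
  BasicBlock X nu eta ∧ (Multiset.card nu = 2 → minPart nu ≤ 1)


/-! ### Basic sequence API -/

/-- 0-indexed column lengths. -/
def hh (l : Ptn) (a : ℕ) : ℕ := height l (a + 1)

/-- 0-indexed parts in decreasing order. -/
def pt (l : Ptn) (i : ℕ) : ℕ := ((Finset.range l.sum).filter (fun a => i < hh l a)).card

lemma hh_anti (l : Ptn) : Antitone (hh l) := by
  intro a b hab
  unfold hh height
  apply Multiset.card_le_card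
  apply Multiset.monotone_filter_right
  intro p hp
  omega

lemma hh_zero (l : Ptn) (a : ℕ) (h : l.sum ≤ a) : hh l a = 0 := by
  unfold hh height
  rw [Multiset.card_eq_zero, Multiset.filter_eq_nil]
  intro p hp
  have := Multiset.single_le_sum (fun x _ => Nat.zero_le x) p hp
  omega

lemma galois (l : Ptn) (a i : ℕ) : i < hh l a ↔ a < pt l i := by
  have key : ∀ b, i < hh l b → b < l.sum := by
    intro b hb
    by_contra hc
    rw [hh_zero l b (by omega)] at hb
    omega
  constructor
  · intro h
    have : Finset.range (a+1) ⊆ (Finset.range l.sum).filter (fun a => i < hh l a) := by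
      intro b hb
      have hb' : b ≤ a := by simpa [Nat.lt_succ_iff] using hb
      have h2 : i < hh l b := lt_of_lt_of_le h (hh_anti l hb')
      simp [h2, key b h2]
    have := Finset.card_le_card this
    rw [Finset.card_range] at this
    exact this
  · intro h
    by_contra hc
    have : (Finset.range l.sum).filter (fun a => i < hh l a) ⊆ Finset.range a := by
      intro b hb
      simp only [Finset.mem_filter, Finset.mem_range] at hb ⊢
      by_contra hba
      have := hh_anti l (show a ≤ b by omega)
      omega
    have := Finset.card_le_card this
    rw [Finset.card_range] at this
    unfold pt at h
    omega

lemma nat_ext {x y : ℕ} (h : ∀ a, a < x ↔ a < y) : x = y := by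
  have h1 := h x
  have h2 := h y
  omega

lemma pt_unique (l : Ptn) (s : ℕ → ℕ) (h : ∀ a i, i < hh l a ↔ a < s i) : pt l = s := by
  funext i
  apply nat_ext
  intro a
  rw [← galois, h]

lemma hh_unique (l : Ptn) (s : ℕ → ℕ) (h : ∀ a i, i < s a ↔ a < pt l i) : hh l = s := by
  funext i
  apply nat_ext
  intro a
  rw [galois, h]

lemma pt_anti (l : Ptn) : Antitone (pt l) := by
  intro i j hij
  by_contra hc
  have h1 := (galois l (pt l i) j).2 (by omega)
  have h2 := (galois l (pt l i) i).1 (by omega)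
  omega

lemma icc_eq (n : ℕ) : Finset.Icc 1 n = (Finset.range n).map (addRightEmbedding 1) := by
  ext x
  simp only [Finset.mem_Icc, Finset.mem_map, Finset.mem_range, addRightEmbedding_apply]
  constructor
  · intro h
    exact ⟨x-1, by omega, by omega⟩
  · rintro ⟨a, h, rfl⟩
    omega

lemma hh_transpose (l : Ptn) : hh (transpose l) = pt l := by
  funext i
  unfold hh height transpose pt
  rw [Multiset.filter_filter, Multiset.filter_map, Multiset.card_map]
  have := icc_eq l.sum
  rw [this, Finset.map_val, Multiset.filter_map, Multiset.card_map]
  rw [Finset.card_def, Finset.filter_val]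
  congr 1
  apply Multiset.filter_congr
  intro x hx
  simp [hh]
  omega

lemma pt_transpose (l : Ptn) : pt (transpose l) = hh l := by
  apply pt_unique
  intro a i
  rw [hh_transpose, galois]

lemma transpose_isPartition (l : Ptn) : IsPartition (transpose l) := by
  intro a ha
  unfold transpose at ha
  exact (Multiset.mem_filter.1 ha).2

lemma hh_add (l m : Ptn) (a : ℕ) : hh (l + m) a = hh l a + hh m a := by
  unfold hh height
  rw [Multiset.filter_add, Multiset.card_add]

lemma hh_cons (x : ℕ) (m : Ptn) (a : ℕ) : hh (x ::ₘ m) a = hh m a + (if a < x then 1 else 0) := by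
  unfold hh height
  by_cases h : a < x
  · rw [Multiset.filter_cons_of_pos _ (by omega)]; simp [h]
  · rw [Multiset.filter_cons_of_neg _ (by omega)]; simp [h]

lemma hh_nil (a : ℕ) : hh (0 : Ptn) a = 0 := by
  simp [hh, height]

lemma count_eq (l : Ptn) (a : ℕ) : l.count (a+1) + hh l (a+1) = hh l a := by
  induction l using Multiset.induction with
  | empty => simp [hh_nil]
  | cons x m ih =>
    rw [hh_cons, hh_cons, Multiset.count_cons]
    split_ifs <;> omega

lemma ext_hh {l m : Ptn} (hl : IsPartition l) (hm : IsPartition m) (h : hh l = hh m) : l = m := by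
  ext a
  rcases Nat.eq_zero_or_pos a with rfl | ha
  · rw [Multiset.count_eq_zero_of_notMem, Multiset.count_eq_zero_of_notMem]
    · intro h; exact absurd (hm _ h) (by omega)
    · intro h; exact absurd (hl _ h) (by omega)
  · obtain ⟨b, rfl⟩ : ∃ b, a = b + 1 := ⟨a-1, by omega⟩
    have h1 := count_eq l b
    have h2 := count_eq m b
    rw [h] at h1
    omega

lemma ext_pt {l m : Ptn} (hl : IsPartition l) (hm : IsPartition m) (h : pt l = pt m) : l = m := by
  apply ext_hh hl hm
  apply hh_unique
  intro a i
  rw [galois, h]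

lemma transpose_transpose {l : Ptn} (hl : IsPartition l) : transpose (transpose l) = l := by
  apply ext_hh (transpose_isPartition _) hl
  rw [hh_transpose, pt_transpose]

lemma psum_eq (l : Ptn) (j : ℕ) : psum l j = ∑ i ∈ Finset.range j, pt l i := by
  unfold psum pt
  have := icc_eq l.sum
  rw [this, Finset.sum_map]
  simp only [addRightEmbedding_apply, Finset.card_filter]
  rw [Finset.sum_comm]
  apply Finset.sum_congr rfl
  intro a _
  rw [← Finset.card_filter]
  have : (Finset.range j).filter (fun i => i < hh l a) = Finset.range (min j (hh l a)) := by
    ext x; simp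
  rw [this, Finset.card_range]
  rfl

lemma psum_min (l : Ptn) (j : ℕ) : psum l j = ∑ b ∈ Finset.range l.sum, min j (hh l b) := by
  unfold psum
  rw [icc_eq, Finset.sum_map]
  rfl

lemma psum_zero (l : Ptn) : psum l 0 = 0 := by simp [psum_eq]

lemma psum_succ (l : Ptn) (j : ℕ) : psum l (j+1) = psum l j + pt l j := by
  rw [psum_eq, psum_eq, Finset.sum_range_succ]

lemma psum_mono (l : Ptn) : Monotone (psum l) :=
  monotone_nat_of_le_succ (fun n => by rw [psum_succ]; omega)

lemma sum_hh (l : Ptn) (N : ℕ) (h : l.sum ≤ N) : ∑ a ∈ Finset.range N, hh l a = l.sum := by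
  induction l using Multiset.induction generalizing N with
  | empty => simp [hh_nil]
  | cons x m ih =>
    simp only [hh_cons, Finset.sum_add_distrib]
    rw [Multiset.sum_cons] at h
    rw [ih N (by omega), Multiset.sum_cons, ← Finset.card_filter]
    have : (Finset.range N).filter (fun i => i < x) = Finset.range x := by
      ext y; simp; omega
    rw [this, Finset.card_range]; omega

lemma pt_sum_le (l : Ptn) (i : ℕ) : pt l i ≤ l.sum := by
  unfold pt
  exact (Finset.card_filter_le _ _).trans (by simp)

lemma hh_zero_card (l : Ptn) (hl : IsPartition l) : hh l 0 = Multiset.card l := by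
  unfold hh height
  rw [Multiset.filter_eq_self.2]
  intro a ha
  have := hl a ha
  omega

lemma card_le_sum (l : Ptn) (hl : IsPartition l) : Multiset.card l ≤ l.sum := by
  have := Multiset.card_nsmul_le_sum (s := l) (a := 1) (fun x hx => hl x hx)
  simpa using this

lemma pt_zero (l : Ptn) (i : ℕ) (h : hh l 0 ≤ i) : pt l i = 0 := by
  by_contra hc
  have := (galois l 0 i).2 (by omega)
  omega

lemma hh_le_sum (l : Ptn) (a : ℕ) : hh l a ≤ l.sum := by
  by_cases h : l.sum ≤ a
  · rw [hh_zero l a h]; omega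
  · rw [← sum_hh l l.sum le_rfl]
    exact Finset.single_le_sum (f := hh l) (fun _ _ => Nat.zero_le _) (by simp; omega)

lemma psum_hh0 (l : Ptn) (j : ℕ) (h : hh l 0 ≤ j) : psum l j = l.sum := by
  have : ∑ a ∈ Finset.range l.sum, min j (hh l a) = l.sum := by
    conv_rhs => rw [← sum_hh l l.sum le_rfl]
    apply Finset.sum_congr rfl
    intro a _
    have := hh_anti l (Nat.zero_le a)
    omega
  rw [psum_min, this]

lemma psum_sum (l : Ptn) (j : ℕ) (h : l.sum ≤ j) : psum l j = l.sum :=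
  psum_hh0 l j ((hh_le_sum l 0).trans h)

lemma transpose_sum (l : Ptn) : (transpose l).sum = l.sum := by
  have h1 := psum_sum (transpose l) (max l.sum (transpose l).sum) (le_max_right _ _)
  rw [psum_eq, pt_transpose, sum_hh _ _ (le_max_left _ _)] at h1
  exact h1.symm

lemma psum_le_sum (l : Ptn) (j : ℕ) : psum l j ≤ l.sum := by
  rw [← psum_sum l (max j l.sum) (le_max_right _ _)]
  exact psum_mono l (le_max_left _ _)

lemma pt_eq_of_psum {l m : Ptn} (h : ∀ j, psum l j = psum m j) : pt l = pt m := by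
  funext i
  have h1 := psum_succ l i
  have h2 := psum_succ m i
  rw [h, h] at h1
  omega

lemma sum_eq_of_psum {l m : Ptn} (h : ∀ j, psum l j = psum m j) : l.sum = m.sum := by
  rw [← psum_sum l (max l.sum m.sum) (le_max_left _ _), h,
    psum_sum m (max l.sum m.sum) (le_max_right _ _)]

lemma ext_psum {l m : Ptn} (hl : IsPartition l) (hm : IsPartition m)
    (h : ∀ j, psum l j = psum m j) : l = m :=
  ext_pt hl hm (pt_eq_of_psum h)

/-- Partition with prescribed parts. -/
lemma exists_pt (s : ℕ → ℕ) (N : ℕ) (hs : Antitone s) (hN : s N = 0) :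
    ∃ l : Ptn, IsPartition l ∧ pt l = s := by
  refine ⟨((Multiset.range N).map s).filter (fun x => 0 < x), ?_, ?_⟩
  · intro a ha
    exact (Multiset.mem_filter.1 ha).2
  · apply pt_unique
    intro a i
    have : hh (((Multiset.range N).map s).filter (fun x => 0 < x)) a
        = ((Finset.range N).filter (fun i => a < s i)).card := by
      unfold hh height
      rw [Multiset.filter_filter, Multiset.filter_map, Multiset.card_map]
      rw [Finset.card_def, Finset.filter_val]
      congr 1
      apply Multiset.filter_congr
      intro x hx
      simp
      omega
    rw [this]
    constructor
    · intro h
      by_contra hc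
      have : (Finset.range N).filter (fun i => a < s i) ⊆ Finset.range i := by
        intro b hb
        simp only [Finset.mem_filter, Finset.mem_range] at hb ⊢
        by_contra hba
        have := hs (show i ≤ b by omega)
        omega
      have := Finset.card_le_card this
      rw [Finset.card_range] at this
      omega
    · intro h
      have : Finset.range (i+1) ⊆ (Finset.range N).filter (fun i => a < s i) := by
        intro b hb
        simp only [Finset.mem_filter, Finset.mem_range] at hb ⊢
        have h3 := hs (show b ≤ i by omega)
        refine ⟨?_, by omega⟩
        by_contra hc
        have := hs (show N ≤ b by omega)
        omega
      have := Finset.card_le_card this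
      rw [Finset.card_range] at this
      exact this

lemma exists_psum (T : ℕ → ℕ) (N : ℕ) (h0 : T 0 = 0)
    (hc : ∀ j, T j + T (j+2) ≤ 2 * T (j+1)) (hN : ∀ j, N ≤ j → T j = T N) :
    ∃ l : Ptn, IsPartition l ∧ ∀ j, psum l j = T j := by
  have hmono : ∀ k j, N ≤ j + k → T j ≤ T (j+1) := by
    intro k
    induction k with
    | zero => intro j hj; rw [hN j (by omega), hN (j+1) (by omega)]
    | succ k ih =>
      intro j hj
      have h1 : T (j+1) ≤ T (j+2) := ih (j+1) (by omega)
      have h2 := hc j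
      omega
  have hm : ∀ j, T j ≤ T (j+1) := fun j => hmono N j (by omega)
  obtain ⟨l, hl, hp⟩ := exists_pt (fun i => T (i+1) - T i) N
    (antitone_nat_of_succ_le (fun j => by
      have h1 := hm j; have h2 := hm (j+1); have h3 := hc j
      show T (j+2) - T (j+1) ≤ T (j+1) - T j
      omega)) (by
      show T (N+1) - T N = 0
      rw [hN (N+1) (by omega)]; omega)
  refine ⟨l, hl, ?_⟩
  intro j
  induction j with
  | zero => rw [psum_zero, h0]
  | succ j ih =>
    rw [psum_succ, ih, hp]
    have := hm j
    show T j + (T (j+1) - T j) = _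
    omega

/-- Legendre type inequality between psums of `l` and its transpose. -/
lemma legendre_le (l : Ptn) (a j : ℕ) : psum (transpose l) a + psum l j ≤ j * a + l.sum := by
  induction a with
  | zero => rw [psum_zero]; have := psum_le_sum l j; omega
  | succ a ih =>
    rw [psum_succ, pt_transpose]
    by_cases h : hh l a ≤ j
    · rw [Nat.mul_succ]; omega
    · clear ih
      push Not at h
      have h1 : psum l j + (psum (transpose l) a + hh l a) ≤ j * (a+1) + l.sum := by
        have e1 : psum (transpose l) a + hh l a = ∑ b ∈ Finset.range (a+1), hh l b := by
          rw [psum_eq, pt_transpose, Finset.sum_range_succ]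
        have e2 := psum_min l j
        have ha : a < l.sum := by
          by_contra hc
          rw [hh_zero l a (by omega)] at h
          omega
        rw [e1, e2]
        have e3 := sum_hh l l.sum le_rfl
        have e4 : ∀ f : ℕ → ℕ, ∑ b ∈ Finset.range l.sum, f b
          = ∑ b ∈ Finset.range (a+1), f b + ∑ b ∈ Finset.Ico (a+1) l.sum, f b := by
          intro f
          rw [Finset.sum_range_add_sum_Ico _ (by omega)]
        rw [e4] at e3
        rw [e4]
        have e5 : ∑ b ∈ Finset.range (a+1), min j (hh l b) ≤ j * (a+1) := by
          have := Finset.sum_le_card_nsmul (Finset.range (a+1)) (fun b => min j (hh l b)) j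
            (fun b _ => by simp)
          simp only [Finset.card_range, smul_eq_mul] at this
          rw [mul_comm]; exact this
        have e6 : ∑ b ∈ Finset.Ico (a+1) l.sum, min j (hh l b) ≤
            ∑ b ∈ Finset.Ico (a+1) l.sum, hh l b :=
          Finset.sum_le_sum (fun b _ => min_le_right _ _)
        omega
      omega

lemma legendre_eq (l : Ptn) (a : ℕ) :
    psum (transpose l) a + psum l (hh l a) = hh l a * a + l.sum := by
  have e2 := psum_min l
  by_cases ha : l.sum ≤ a
  · rw [hh_zero l a ha, psum_zero, psum_sum, transpose_sum]
    · omega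
    · rw [transpose_sum]; exact ha
  · rw [psum_eq, pt_transpose, e2]
    have e3 := sum_hh l l.sum le_rfl
    have e4 : ∀ f : ℕ → ℕ, ∑ b ∈ Finset.range l.sum, f b
      = ∑ b ∈ Finset.range a, f b + ∑ b ∈ Finset.Ico a l.sum, f b := by
      intro f
      rw [Finset.sum_range_add_sum_Ico _ (by omega)]
    rw [e4] at e3
    rw [e4]
    have e5 : ∑ b ∈ Finset.range a, min (hh l a) (hh l b) = hh l a * a := by
      rw [Finset.sum_congr rfl (g := fun _ => hh l a)]
      · simp [mul_comm]
      · intro b hb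
        have := hh_anti l (show b ≤ a by simp at hb; omega)
        omega
    have e6 : ∑ b ∈ Finset.Ico a l.sum, min (hh l a) (hh l b) = ∑ b ∈ Finset.Ico a l.sum, hh l b := by
      apply Finset.sum_congr rfl
      intro b hb
      have := hh_anti l (show a ≤ b by simp at hb; omega)
      omega
    omega

lemma dom_transpose {l m : Ptn} (hs : l.sum = m.sum) (h : Dom l m) :
    Dom (transpose m) (transpose l) := by
  intro a
  have h1 := legendre_eq l a
  have h2 := legendre_le m a (hh l a)
  have h3 := h (hh l a)
  omega

/-! ### Collapse formula -/

/-- Shifted partial sums. -/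
def W (e : ℕ) (l : Ptn) (j : ℕ) : ℕ := psum l j + e * j

lemma W_zero (e : ℕ) (l : Ptn) : W e l 0 = 0 := by simp [W, psum_zero]

lemma W_succ (e : ℕ) (l : Ptn) (j : ℕ) : W e l (j+1) = W e l j + pt l j + e := by
  unfold W; rw [psum_succ, Nat.mul_succ]; omega

/-- The amount by which the partial sum drops under collapse. -/
def dec (e : ℕ) (l : Ptn) (j : ℕ) : ℕ :=
  if W e l j % 2 = 1 ∧ ¬ (pt l (j-1) = pt l j ∧ (pt l j + e) % 2 = 1) then 1 else 0

/-- Parameter `e` corresponds to the type `X`. -/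
def Corr (X : PType) (e : ℕ) : Prop := ∀ a, badPart X a ↔ (a + e) % 2 = 1

lemma corrC : Corr PType.C 0 := by
  intro a; simp [badPart, Nat.odd_iff]

lemma corrD : Corr PType.D 1 := by
  intro a; simp only [badPart, Nat.even_iff]; omega

lemma W_lin (e : ℕ) (l : Ptn) (a m : ℕ) (h : hh l (a+1) + m ≤ hh l a) :
    W e l (hh l (a+1) + m) = W e l (hh l (a+1)) + m * (a+1+e) := by
  induction m with
  | zero => simp
  | succ m ih =>
    have h1 := ih (by omega)
    have h2 := (galois l a (hh l (a+1) + m)).1 (by omega)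
    have h3 := mt (galois l (a+1) (hh l (a+1) + m)).2 (by omega)
    have h4 : pt l (hh l (a+1) + m) = a + 1 := by omega
    rw [← add_assoc, W_succ, h1, h4, Nat.succ_mul]
    omega

lemma mul_mod_odd {x y : ℕ} (h : (x * y) % 2 = 1) : x % 2 = 1 ∧ y % 2 = 1 := by
  rw [← Nat.odd_iff, Nat.odd_mul, Nat.odd_iff, Nat.odd_iff] at h
  exact h

lemma W_corner_of_InP {X : PType} {e : ℕ} (hX : Corr X e) {l : Ptn} (h : InP X l) (a : ℕ) :
    W e l (hh l a) % 2 = 0 := by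
  have : ∀ k a, l.sum ≤ a + k → W e l (hh l a) % 2 = 0 := by
    intro k
    induction k with
    | zero => intro a ha; rw [hh_zero l a (by omega), W_zero]
    | succ k ih =>
      intro a ha
      have h1 := ih (a+1) (by omega)
      have h2 := count_eq l a
      have h3 := W_lin e l a (l.count (a+1)) (by omega)
      rw [show hh l (a+1) + l.count (a+1) = hh l a by omega] at h3
      rw [h3]
      by_contra hc
      have h4 : (l.count (a+1) * (a+1+e)) % 2 = 1 := by omega
      have h5 := mul_mod_odd h4
      have h6 := h.2 (a+1) ((hX _).2 h5.2)
      rw [Nat.even_iff] at h6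
      omega
  exact this l.sum a (by omega)

lemma cond_of_InP {X : PType} {e : ℕ} (hX : Corr X e) {l : Ptn} (h : InP X l)
    (hs : l.sum % 2 = 0) (j : ℕ) (hj : W e l j % 2 = 1) :
    pt l (j-1) = pt l j ∧ (pt l j + e) % 2 = 1 := by
  have hc := W_corner_of_InP hX h
  have hj0 : j ≠ 0 := by rintro rfl; rw [W_zero] at hj; omega
  have hle := pt_anti l (show j - 1 ≤ j by omega)
  have heq : pt l (j-1) = pt l j := by
    by_contra hne
    have h1 := (galois l (pt l (j-1) - 1) (j-1)).2 (by omega)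
    have h2 := mt (galois l (pt l (j-1) - 1) j).1 (by omega)
    have h3 := hc (pt l (j-1) - 1)
    rw [show hh l (pt l (j-1) - 1) = j by omega] at h3
    omega
  refine ⟨heq, ?_⟩
  rcases Nat.eq_zero_or_pos (pt l j) with h0 | h0
  · have h1 := mt (galois l 0 j).1 (by omega)
    have h2 := psum_hh0 l j (by omega)
    unfold W at hj
    rw [h2] at hj
    have := mul_mod_odd (show (e * j) % 2 = 1 by omega)
    omega
  · obtain ⟨a, ha⟩ : ∃ a, pt l j = a + 1 := ⟨pt l j - 1, by omega⟩
    have h1 := (galois l a j).2 (by omega)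
    have h2 := mt (galois l (a+1) j).1 (by omega)
    have h3 := W_lin e l a (j - hh l (a+1)) (by omega)
    rw [show hh l (a+1) + (j - hh l (a+1)) = j by omega] at h3
    have h4 := hc (a+1)
    have := mul_mod_odd (show ((j - hh l (a+1)) * (a+1+e)) % 2 = 1 by omega)
    omega

lemma InP_of_cond {X : PType} {e : ℕ} (hX : Corr X e) {l : Ptn} (hl : IsPartition l)
    (h : ∀ j, W e l j % 2 = 1 → pt l (j-1) = pt l j) : InP X l := by
  have hc : ∀ a, W e l (hh l a) % 2 = 0 := by
    intro a
    by_contra hc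
    have h1 := h (hh l a) (by omega)
    have hj0 : hh l a ≠ 0 := by intro h0; rw [h0, W_zero] at hc; omega
    have h2 := (galois l a (hh l a - 1)).1 (by omega)
    have h3 := mt (galois l a (hh l a)).2 (by omega)
    omega
  refine ⟨hl, ?_⟩
  intro a ha
  rw [hX] at ha
  rcases Nat.eq_zero_or_pos a with rfl | h0
  · rw [Multiset.count_eq_zero_of_notMem]
    · exact Even.zero
    · intro h; exact absurd (hl _ h) (by omega)
  · obtain ⟨b, rfl⟩ : ∃ b, a = b + 1 := ⟨a-1, by omega⟩
    have h2 := count_eq l b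
    have h3 := W_lin e l b (l.count (b+1)) (by omega)
    rw [show hh l (b+1) + l.count (b+1) = hh l b by omega] at h3
    have h4 := hc b
    have h5 := hc (b+1)
    rw [Nat.even_iff]
    by_contra hne
    have h6 : (l.count (b+1) * (b+1+e)) % 2 = 1 := by
      rw [Nat.mul_mod, show l.count (b+1) % 2 = 1 by omega, ha]
    omega

lemma collapse_exists (e : ℕ) (l : Ptn) (hs : l.sum % 2 = 0) :
    ∃ m : Ptn, IsPartition m ∧ ∀ j, psum m j + dec e l j = psum l j := by
  have hd : ∀ j, dec e l j ≤ psum l j := by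
    intro j
    by_contra hc
    have h1 : psum l j = 0 := by unfold dec at hc; split_ifs at hc <;> omega
    rcases j with _ | j
    · simp [dec, W_zero, psum_zero] at hc
    · have h2 := psum_succ l j
      have h3 := pt_anti l (show j ≤ j + 1 by omega)
      apply hc
      unfold dec
      rw [if_neg]
      · omega
      · rintro ⟨h4, h5⟩
        unfold W at h4
        rw [h1, zero_add] at h4
        have := mul_mod_odd h4
        apply h5
        rw [Nat.add_sub_cancel]
        constructor <;> omega
  have htail : ∀ j, l.sum + 1 ≤ j → dec e l j = 0 := by
    intro j hj
    have h0 := hh_le_sum l 0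
    have h1 := pt_zero l j (by omega)
    have h2 := pt_zero l (j-1) (by omega)
    have h3 := psum_sum l j (by omega)
    unfold dec
    rw [if_neg]
    rintro ⟨h4, h5⟩
    unfold W at h4
    have := mul_mod_odd (show (e * j) % 2 = 1 by omega)
    apply h5
    constructor <;> omega
  obtain ⟨m, hm, hp⟩ := exists_psum (fun j => psum l j - dec e l j) (l.sum + 1)
    (by simp [psum_zero]) (by
      intro j
      show (psum l j - dec e l j) + (psum l (j+2) - dec e l (j+2)) ≤ 2 * (psum l (j+1) - dec e l (j+1))
      have a1 := hd j
      have a2 := hd (j+1)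
      have a3 := hd (j+2)
      have b1 := psum_succ l j
      have b2 : psum l (j+2) = _ := psum_succ l (j+1)
      have c1 := W_succ e l j
      have c2 : W e l (j+2) = _ := W_succ e l (j+1)
      have d1 := pt_anti l (show j ≤ j + 1 by omega)
      unfold dec at *
      simp only [Nat.add_sub_cancel, show j + 2 - 1 = j + 1 by omega] at *
      split_ifs at * <;> omega)
    (by
      intro j hj
      show psum l j - dec e l j = psum l (l.sum+1) - dec e l (l.sum+1)
      rw [htail j hj, htail _ le_rfl, psum_sum l j (by omega), psum_sum l (l.sum+1) (by omega)])
  refine ⟨m, hm, ?_⟩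
  intro j
  have h1 := hd j
  have h2 : psum m j = psum l j - dec e l j := hp j
  omega

lemma isCollapse_of {X : PType} {e : ℕ} (hX : Corr X e) {l m : Ptn} (hs : l.sum % 2 = 0)
    (hm : IsPartition m) (h : ∀ j, psum m j + dec e l j = psum l j) : IsCollapse X l m := by
  have hd1 : ∀ j, dec e l j ≤ 1 := by intro j; unfold dec; split_ifs <;> omega
  have hW : ∀ j, W e m j + dec e l j = W e l j := by
    intro j; have := h j; unfold W; omega
  refine ⟨?_, ?_, ?_, ?_⟩
  · apply InP_of_cond hX hm
    intro j hj
    rcases j with _ | j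
    · simp [W_zero] at hj
    · have b1 := psum_succ m j
      have b2 : psum m (j+2) = _ := psum_succ m (j+1)
      have b3 := psum_succ l j
      have b4 : psum l (j+2) = _ := psum_succ l (j+1)
      have c1 := W_succ e l j
      have c2 : W e l (j+2) = _ := W_succ e l (j+1)
      have e1 := hW (j+1)
      have f0 := h j
      have f1 := h (j+1)
      have f2 := h (j+2)
      unfold dec at *
      simp only [Nat.add_sub_cancel, show j + 2 - 1 = j + 1 by omega] at *
      split_ifs at * <;> omega
  · have h1 := h (max m.sum l.sum + 1)
    have h0 := hh_le_sum l 0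
    have e1 := pt_zero l (max m.sum l.sum + 1) (by omega)
    have e2 := pt_zero l (max m.sum l.sum + 1 - 1) (by omega)
    have e3 := psum_sum l (max m.sum l.sum + 1) (by omega)
    have e4 := psum_sum m (max m.sum l.sum + 1) (by omega)
    have e5 : dec e l (max m.sum l.sum + 1) = 0 := by
      unfold dec
      rw [if_neg]
      rintro ⟨h4, h5⟩
      unfold W at h4
      have := mul_mod_odd (show (e * (max m.sum l.sum + 1)) % 2 = 1 by omega)
      apply h5
      constructor <;> omega
    omega
  · intro j; have := h j; omega
  · intro n hn hns hdom j
    have f1 := h j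
    have f2 := hdom j
    have f3 := hd1 j
    by_contra hc
    have g1 : psum n j = psum l j := by omega
    have g2 : dec e l j = 1 := by omega
    have g3 : W e n j = W e l j := by unfold W; omega
    have g4 : W e l j % 2 = 1 := by unfold dec at g2; split_ifs at g2; omega
    have g5 := cond_of_InP hX hn (by omega) j (by omega)
    have hj0 : j ≠ 0 := by rintro rfl; rw [W_zero] at g4; omega
    obtain ⟨i, rfl⟩ : ∃ i, j = i + 1 := ⟨j-1, by omega⟩
    have f4 := hdom i
    have f5 := hdom (i+2)
    have b1 := psum_succ n i
    have b2 : psum n (i+2) = _ := psum_succ n (i+1)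
    have b3 := psum_succ l i
    have b4 : psum l (i+2) = _ := psum_succ l (i+1)
    have d1 := pt_anti l (show i ≤ i + 1 by omega)
    unfold dec at g2
    simp only [Nat.add_sub_cancel] at *
    split_ifs at g2; omega

lemma isCollapse_unique {X : PType} {l m m' : Ptn} (h : IsCollapse X l m) (h' : IsCollapse X l m') :
    m = m' := by
  obtain ⟨a1, a2, a3, a4⟩ := h
  obtain ⟨b1, b2, b3, b4⟩ := h'
  apply ext_psum a1.1 b1.1
  intro j
  exact le_antisymm (b4 _ a1 a2 a3 j) (a4 _ b1 b2 b3 j)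

lemma collapse_eq_of_isCollapse {X : PType} {l m : Ptn} (h : IsCollapse X l m) :
    collapse X l = m := by
  have hd : CollapseDefined X l := ⟨m, h⟩
  unfold collapse
  rw [dif_pos hd]
  exact isCollapse_unique hd.choose_spec h

lemma collapse_eq {X : PType} {e : ℕ} (hX : Corr X e) {l m : Ptn} (hs : l.sum % 2 = 0)
    (hm : IsPartition m) (h : ∀ j, psum m j + dec e l j = psum l j) : collapse X l = m :=
  collapse_eq_of_isCollapse (isCollapse_of hX hs hm h)

lemma collapse_spec {X : PType} {e : ℕ} (hX : Corr X e) {l : Ptn} (hs : l.sum % 2 = 0) :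
    IsPartition (collapse X l) ∧ (collapse X l).sum = l.sum ∧
      ∀ j, psum (collapse X l) j + dec e l j = psum l j := by
  obtain ⟨m, hm, h⟩ := collapse_exists e l hs
  have h2 := isCollapse_of hX hs hm h
  rw [collapse_eq_of_isCollapse h2]
  exact ⟨hm, h2.2.1, h⟩

/-! ### The transposed D-collapse of a type D partition -/

/-- The amount by which the partial sums grow. -/
def ee (l : Ptn) (j : ℕ) : ℕ :=
  if 1 ≤ j ∧ (psum l j % 2 = 1 ∨ (pt l (j-1) = pt l j ∧ pt l j % 2 = 1)) then 1 else 0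

lemma ee_tail (l : Ptn) (hs : l.sum % 2 = 0) (j : ℕ) (h : hh l 0 ≤ j) : ee l j = 0 := by
  unfold ee
  have h1 := pt_zero l j h
  have h2 := psum_hh0 l j h
  rw [if_neg]
  omega

lemma even_psum_of_transpose {r : Ptn} (h : InP PType.D (transpose r)) (hs : r.sum % 2 = 0)
    (j : ℕ) (hj : j % 2 = 1) : psum r j % 2 = 0 := by
  have : ∀ k j, j % 2 = 1 → r.sum ≤ j + k → psum r j % 2 = 0 := by
    intro k
    induction k with
    | zero => intro j _ hj; rw [psum_sum r j (by omega)]; exact hs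
    | succ k ih =>
      intro j hj1 hj2
      have h1 := ih (j+2) (by omega) (by omega)
      have h2 := psum_succ r j
      have h3 : psum r (j+2) = _ := psum_succ r (j+1)
      have h4 := count_eq (transpose r) j
      rw [hh_transpose] at h4
      have h5 := h.2 (j+1) (by simp only [badPart, Nat.even_iff]; omega)
      rw [Nat.even_iff] at h5
      omega
  exact this r.sum j hj (by omega)

lemma transpose_InP_of_even {r : Ptn} (h : ∀ j, j % 2 = 1 → psum r j % 2 = 0) :
    InP PType.D (transpose r) := by
  refine ⟨transpose_isPartition r, ?_⟩
  intro a ha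
  simp only [badPart, Nat.even_iff] at ha
  rcases Nat.eq_zero_or_pos a with rfl | h0
  · rw [Multiset.count_eq_zero_of_notMem]
    · exact Even.zero
    · intro h; exact absurd (transpose_isPartition r _ h) (by omega)
  · obtain ⟨b, rfl⟩ : ∃ b, a = b + 1 := ⟨a-1, by omega⟩
    have h1 := h b (by omega)
    have h1' := h (b+2) (by omega)
    have h2 := psum_succ r b
    have h3 : psum r (b+2) = _ := psum_succ r (b+1)
    have h4 := count_eq (transpose r) b
    rw [hh_transpose] at h4
    rw [Nat.even_iff]
    omega

lemma R2_spec {l : Ptn} (h : InP PType.D l) (hs : l.sum % 2 = 0) (j : ℕ) :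
    psum (transpose (collapse PType.D (transpose l))) j = psum l j + ee l j := by
  have hcond : ∀ j, (psum l j + j) % 2 = 1 → pt l (j-1) = pt l j ∧ (pt l j + 1) % 2 = 1 := by
    intro j hj
    exact cond_of_InP corrD h hs j (by unfold W; omega)
  obtain ⟨m, hm, hp⟩ := exists_psum (fun j => psum l j + ee l j) l.sum (by simp [psum_zero, ee])
    (by
      intro j
      show (psum l j + ee l j) + (psum l (j+2) + ee l (j+2)) ≤ 2 * (psum l (j+1) + ee l (j+1))
      have b1 := psum_succ l j
      have b2 : psum l (j+2) = _ := psum_succ l (j+1)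
      have d1 := pt_anti l (show j ≤ j + 1 by omega)
      unfold ee
      simp only [Nat.add_sub_cancel, show j + 2 - 1 = j + 1 by omega]
      split_ifs <;> omega)
    (by
      intro j hj
      have h0 := hh_le_sum l 0
      show psum l j + ee l j = psum l l.sum + ee l l.sum
      rw [ee_tail l hs j (by omega), ee_tail l hs _ h0, psum_sum l j hj, psum_sum l _ le_rfl])
  have hp' : ∀ j, psum m j = psum l j + ee l j := hp
  have hsum : m.sum = l.sum := by
    have h0 := hh_le_sum l 0
    have h1 := hp' (max m.sum l.sum)
    rw [ee_tail l hs _ (by omega), psum_sum m _ (by omega), psum_sum l _ (by omega)] at h1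
    omega
  have hcol : IsCollapse PType.D (transpose l) (transpose m) := by
    refine ⟨?_, ?_, ?_, ?_⟩
    · apply transpose_InP_of_even
      intro j hj
      rw [hp']
      have := hcond j
      unfold ee
      split_ifs <;> omega
    · rw [transpose_sum, transpose_sum, hsum]
    · apply dom_transpose hsum.symm
      intro j
      rw [hp']
      omega
    · intro n hn hns hdom
      rw [transpose_sum] at hns
      have hnn := transpose_transpose hn.1
      have hdom2 : Dom l (transpose n) := by
        have := dom_transpose (by rw [transpose_sum, hns]) hdom
        rwa [transpose_transpose h.1] at this
      have hev : ∀ j, j % 2 = 1 → psum (transpose n) j % 2 = 0 := by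
        apply even_psum_of_transpose
        · rw [hnn]; exact hn
        · rw [transpose_sum]; omega
      have : Dom m (transpose n) := by
        intro j
        rw [hp']
        rcases j with _ | j
        · simp [psum_zero, ee]
        · have b1 := psum_succ l j
          have b2 : psum l (j+2) = _ := psum_succ l (j+1)
          have c1 := psum_succ (transpose n) j
          have c2 : psum (transpose n) (j+2) = _ := psum_succ (transpose n) (j+1)
          have d1 := pt_anti (transpose n) (show j ≤ j + 1 by omega)
          have e0 := hdom2 j
          have e1 := hdom2 (j+1)
          have e2 := hdom2 (j+2)
          have f0 := hev j
          have f1 := hev (j+1)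
          have f2 := hev (j+2)
          have g1 := hcond (j+1)
          unfold ee
          simp only [Nat.add_sub_cancel] at *
          split_ifs <;> omega
      have := dom_transpose (by rw [transpose_sum]; omega) this
      rwa [hnn] at this
  rw [collapse_eq_of_isCollapse hcol, transpose_transpose hm, hp']

lemma pt_union (l m : Ptn) (k p : ℕ) (hl : ∀ a, a < k → hh l a = p) (hl0 : hh l 0 ≤ p)
    (hm : ∀ a, k ≤ a → hh m a = 0) (i : ℕ) :
    pt (l + m) i = if i < p then pt l i else pt m (i - p) := by
  have := pt_unique (l + m) (fun i => if i < p then pt l i else pt m (i - p)) (by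
    intro a i
    rw [hh_add]
    have h0 := hh_anti l (Nat.zero_le a)
    have h1 := galois l a i
    have h2 := galois m a (i - p)
    have h3 := hl a
    have h4 := hm a
    show _ ↔ a < if i < p then pt l i else pt m (i - p)
    split_ifs with hi
    · rw [← h1]; omega
    · rw [← h2]; omega)
  rw [this]

lemma psum_union (l m : Ptn) (k p : ℕ) (hl : ∀ a, a < k → hh l a = p) (hl0 : hh l 0 ≤ p)
    (hm : ∀ a, k ≤ a → hh m a = 0) (j : ℕ) :
    psum (l + m) j = psum l (min j p) + psum m (j - p) := by
  induction j with
  | zero => simp [psum_zero]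
  | succ j ih =>
    rw [psum_succ, ih, pt_union l m k p hl hl0 hm]
    split_ifs with h
    · rw [show min j p = j by omega, show min (j+1) p = j + 1 by omega, psum_succ,
        show j - p = 0 by omega, show j + 1 - p = 0 by omega]
      omega
    · rw [show min j p = p by omega, show min (j+1) p = p by omega,
        show j + 1 - p = (j - p) + 1 by omega, psum_succ]
      omega

lemma pt_down {l : Ptn} (hl : IsPartition l) (h0 : l ≠ 0) (i : ℕ) :
    pt (down l) i = if i + 1 = hh l 0 then pt l i - 1 else pt l i := by
  have hmem : minPart l ∈ l := by
    obtain ⟨a, ha⟩ := Multiset.exists_mem_of_ne_zero h0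
    exact Nat.sInf_mem (s := {a | a ∈ l}) ⟨a, ha⟩
  have hmin : ∀ a ∈ l, minPart l ≤ a := fun a ha => Nat.sInf_le ha
  have hpos := hl _ hmem
  have hfull : ∀ a, a < minPart l → hh l a = hh l 0 := by
    intro a ha
    rw [hh_zero_card l hl]
    unfold hh height
    rw [Multiset.filter_eq_self.2]
    intro b hb
    have := hmin b hb
    omega
  have hcons := Multiset.cons_erase hmem
  have e1 : ∀ a, hh l a = hh (l.erase (minPart l)) a + (if a < minPart l then 1 else 0) := by
    intro a
    rw [← hh_cons, hcons]
  have e2 : ∀ a, hh (down l) a = hh (l.erase (minPart l)) a + (if a < minPart l - 1 then 1 else 0) := by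
    intro a
    unfold down
    split_ifs <;> simp_all [hh_cons]
  have hlast : ∀ a, minPart l ≤ a → hh l a < hh l 0 := by
    intro a ha
    have h1 := e1 a
    have h2 := e1 0
    have h3 := hh_anti (l.erase (minPart l)) (Nat.zero_le a)
    split_ifs at * <;> omega
  have := pt_unique (down l) (fun i => if i + 1 = hh l 0 then pt l i - 1 else pt l i) (by
    intro a i
    have h1 := galois l a i
    have h1' := galois l (a+1) i
    have h2 := e1 a
    have h2' := e1 (a+1)
    have h3 := e2 a
    have h4 := hfull a
    have h5 := hlast a
    have h4' := hfull (a+1)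
    have h5' := hlast (a+1)
    show _ ↔ a < if i + 1 = hh l 0 then pt l i - 1 else pt l i
    split_ifs at * <;> omega)
  rw [this]

lemma hh0_pos {l : Ptn} (hl : IsPartition l) (h0 : l ≠ 0) : 1 ≤ hh l 0 := by
  rw [hh_zero_card l hl]
  have := Multiset.card_pos.2 h0
  omega

lemma psum_down {l : Ptn} (hl : IsPartition l) (h0 : l ≠ 0) (j : ℕ) :
    psum (down l) j + (if hh l 0 ≤ j then 1 else 0) = psum l j := by
  have hp := hh0_pos hl h0
  induction j with
  | zero => rw [psum_zero, psum_zero, if_neg (by omega)]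
  | succ j ih =>
    rw [psum_succ, psum_succ, pt_down hl h0]
    have := galois l 0 j
    split_ifs at * <;> omega

lemma down_sum {l : Ptn} (hl : IsPartition l) (h0 : l ≠ 0) : (down l).sum + 1 = l.sum := by
  have h1 := psum_down hl h0 (max (down l).sum l.sum)
  have := hh_le_sum l 0
  rw [if_pos (by omega), psum_sum _ _ (by omega), psum_sum _ _ (by omega)] at h1
  exact h1

/-! ### The two main steps -/

lemma W0 (l : Ptn) (j : ℕ) : W 0 l j = psum l j := by simp [W]

lemma R1_spec {l : Ptn} (hl : IsPartition l) (hs : l.sum % 2 = 1) (k : ℕ) (hk : k % 2 = 0)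
    (hmin : ∀ a, a < k → hh l a = hh l 0) :
    hh (collapse PType.C (down l)) 0 ≤ hh l 0 ∧
      ∀ a, a < k → hh (collapse PType.C (down l)) a = hh l 0 := by
  have h0 : l ≠ 0 := by rintro rfl; simp at hs
  have hds := down_sum hl h0
  have hp := hh0_pos hl h0
  obtain ⟨_, h2, h3⟩ := collapse_spec corrC (show (down l).sum % 2 = 0 by omega)
  set R := collapse PType.C (down l) with hR
  obtain ⟨p, hpp⟩ : ∃ p, hh l 0 = p + 1 := ⟨hh l 0 - 1, by omega⟩
  have a0 := h3 p
  have a1 := h3 (p+1)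
  have a2 := h3 (p+2)
  have b0 := psum_down hl h0 p
  have b1 := psum_down hl h0 (p+1)
  have b2 := psum_down hl h0 (p+2)
  have c1 := psum_succ R p
  have c2 : psum R (p+2) = _ := psum_succ R (p+1)
  have d1 := psum_succ l p
  have d2 := psum_hh0 l (p+1) (by omega)
  have d3 := psum_hh0 l (p+2) (by omega)
  have hge : k ≤ pt l p := by
    rcases Nat.eq_zero_or_pos k with h | h
    · omega
    · have := hmin (k-1) (by omega)
      have := (galois l (k-1) p).1 (by omega)
      omega
  have f0 := pt_down hl h0 p
  have f1 := pt_down hl h0 (p-1)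
  have f2 := pt_anti l (show p - 1 ≤ p by omega)
  have f3 : pt l p ≠ 0 := by
    have := (galois l 0 p).1 (by omega)
    omega
  have f4 : p = 0 → psum l p = 0 := by rintro rfl; exact psum_zero l
  rw [if_pos (by omega)] at f0 b1 b2
  rw [if_neg (by omega)] at b0
  have hz : pt R (p+1) = 0 := by
    unfold dec at *
    simp only [W0] at *
    split_ifs at * <;> omega
  have hk2 : k ≤ pt R p := by
    unfold dec at *
    simp only [W0] at *
    split_ifs at * <;> omega
  have hle : hh R 0 ≤ hh l 0 := by
    have := mt (galois R 0 (p+1)).1 (by omega)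
    omega
  refine ⟨hle, ?_⟩
  intro a ha
  have g1 := (galois R a p).2 (by omega)
  have g2 := hh_anti R (Nat.zero_le a)
  omega

lemma step1 {l m : Ptn} (hl : IsPartition l) (hs : l.sum % 2 = 1) (k : ℕ) (hk : k % 2 = 0)
    (hmin : ∀ a, a < k → hh l a = hh l 0) (hm : InP PType.D m) (hms : m.sum % 2 = 0)
    (hmax : ∀ a, k ≤ a → hh m a = 0) :
    (∀ a, k ≤ a → hh (transpose (collapse PType.D (transpose m))) a = 0) ∧
    collapse PType.C (down (l + m)) =
      collapse PType.C (down l) + transpose (collapse PType.D (transpose m)) := by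
  have h0 : l ≠ 0 := by rintro rfl; simp at hs
  have hR2 := R2_spec hm hms
  have hR2p : IsPartition (transpose (collapse PType.D (transpose m))) := transpose_isPartition _
  set R2 := transpose (collapse PType.D (transpose m)) with hR2def
  obtain ⟨hR1a, hR1b⟩ := R1_spec hl hs k hk hmin
  have hds := down_sum hl h0
  have hp := hh0_pos hl h0
  obtain ⟨g1, g2, g3⟩ := collapse_spec corrC (show (down l).sum % 2 = 0 by omega)
  set R1 := collapse PType.C (down l) with hR1
  have hm0 : pt m 0 ≤ k := by
    by_contra hc
    have := (galois m k 0).2 (by omega)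
    have := hmax k le_rfl
    omega
  have hR2max : ∀ a, k ≤ a → hh R2 a = 0 := by
    have e1 : pt R2 0 ≤ k := by
      have h1 := psum_succ R2 0
      have h2 := psum_succ m 0
      have h3 := hR2 1
      rw [psum_zero] at h1 h2
      unfold ee at h3
      simp only [zero_add, Nat.sub_self] at *
      have := pt_anti m (show 0 ≤ 1 by omega)
      split_ifs at h3 <;> omega
    intro a ha
    have := mt (galois R2 a 0).1 (by omega)
    omega
  refine ⟨hR2max, ?_⟩
  by_cases hmz : m = 0
  · have : R2 = 0 := by
      apply ext_psum hR2p (by intro a ha; simp at ha)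
      intro j
      rw [hR2, ee_tail m hms j (by rw [hmz, hh_nil]; omega), hmz]
      rfl
    rw [this, hmz, add_zero, add_zero]
  have hq := hh0_pos hm.1 hmz
  have hlm : IsPartition (l + m) := by
    intro a ha
    rcases Multiset.mem_add.1 ha with h | h
    · exact hl a h
    · exact hm.1 a h
  have hlm0 : l + m ≠ 0 := by
    intro h
    apply h0
    exact (add_eq_zero.1 h).1
  have hdslm := down_sum hlm hlm0
  rw [Multiset.sum_add] at hdslm
  have pu := pt_union l m k (hh l 0) hmin le_rfl hmax
  have su := psum_union l m k (hh l 0) hmin le_rfl hmax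
  have hgel : k ≤ pt l (hh l 0 - 1) := by
    rcases Nat.eq_zero_or_pos k with h | h
    · omega
    · have := hmin (k-1) (by omega)
      have := (galois l (k-1) (hh l 0 - 1)).1 (by omega)
      omega
  have hll : pt l (hh l 0 - 1) ≠ 0 := by
    have := (galois l 0 (hh l 0 - 1)).1 (by omega)
    omega
  have hmm : ∀ i, i < hh m 0 → pt m i ≠ 0 := by
    intro i hi
    have := (galois m 0 i).1 hi
    omega
  have hhlm : hh (l + m) 0 = hh l 0 + hh m 0 := hh_add l m 0
  have pd := pt_down hlm hlm0
  have sd := psum_down hlm hlm0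
  have pdl := pt_down hl h0
  have sdl := psum_down hl h0
  have sl := psum_hh0 l (hh l 0) le_rfl
  rw [hhlm] at pd sd
  apply collapse_eq corrC (by omega)
  · intro a ha
    rcases Multiset.mem_add.1 ha with h | h
    · exact g1 a h
    · exact hR2p a h
  intro j
  rw [psum_union R1 R2 k (hh l 0) hR1b hR1a hR2max]
  have sdj := sd j
  rw [su] at sdj
  have pdj := pd j
  have pdj' := pd (j-1)
  rw [pu] at pdj pdj'
  by_cases hj : j < hh l 0
  · rw [show min j (hh l 0) = j by omega, show j - hh l 0 = 0 by omega, psum_zero] at *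
    rw [if_neg (by omega)] at sdj
    rw [if_neg (by omega), if_pos (by omega)] at pdj pdj'
    have g3j := g3 j
    have sdlj := sdl j
    rw [if_neg (by omega)] at sdlj
    have hd : dec 0 (down (l+m)) j = dec 0 (down l) j := by
      have p1 := pdl j
      have p2 := pdl (j-1)
      by_cases hj0 : j = 0
      · subst hj0
        simp [dec, W_zero]
      rw [if_neg (by omega)] at p2
      unfold dec
      rw [W0, W0, pdj, pdj', p1, p2, show psum (down (l+m)) j = psum (down l) j by omega]
      by_cases hjp : j + 1 = hh l 0
      · have e1 := psum_succ l j
        have e2 := pt_anti l (show j - 1 ≤ j by omega)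
        rw [hjp, sl] at e1
        rw [show hh l 0 - 1 = j by omega] at hll
        rw [if_pos hjp]
        split_ifs <;> omega
      · rw [if_neg hjp]
    rw [hd]
    omega
  · obtain ⟨i, rfl⟩ : ∃ i, j = hh l 0 + i := ⟨j - hh l 0, by omega⟩
    rw [show min (hh l 0 + i) (hh l 0) = hh l 0 by omega,
      show hh l 0 + i - hh l 0 = i by omega] at *
    have hR1s := psum_hh0 R1 (hh l 0) hR1a
    rw [if_neg (show ¬ (hh l 0 + i < hh l 0) by omega)] at pdj
    rw [hR1s, hR2]
    suffices h : ee m i + dec 0 (down (l+m)) (hh l 0 + i) + (if hh m 0 ≤ i then 1 else 0) = 1 by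
      split_ifs at * <;> omega
    by_cases hiq : hh m 0 ≤ i
    · rw [ee_tail m hms i hiq, if_pos hiq]
      have := psum_hh0 m i hiq
      rw [if_pos (by omega)] at sdj
      unfold dec
      rw [W0, if_neg (by omega)]
    · rw [if_neg hiq]
      rw [if_neg (by omega)] at sdj
      have e1 := psum_succ m i
      have e2 := psum_hh0 m (hh m 0) le_rfl
      have e3 := pt_anti m (show i - 1 ≤ i by omega)
      have e4 := hmm i (by omega)
      rcases Nat.eq_zero_or_pos i with hi0 | hi0
      · subst hi0
        rw [if_neg (by omega), if_pos (by omega)] at pdj'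
        rw [psum_zero] at sdj
        simp only [add_zero] at *
        unfold ee dec
        rw [W0, pdj', pdj]
        split_ifs <;> omega
      · rw [if_neg (by omega), if_neg (by omega),
          show hh l 0 + i - 1 - hh l 0 = i - 1 by omega] at pdj'
        by_cases hil : i + 1 = hh m 0
        · rw [hil, e2] at e1
          rw [if_pos (by omega)] at pdj
          unfold ee dec
          rw [W0, pdj', pdj]
          split_ifs <;> omega
        · rw [if_neg (by omega)] at pdj
          unfold ee dec
          rw [W0, pdj', pdj]
          split_ifs <;> omega

lemma psum_pjoin (l m : Ptn) (j : ℕ) : psum (pjoin l m) j = psum l j + psum m j := by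
  induction j with
  | zero => simp [psum_zero]
  | succ j ih =>
    rw [psum_succ, psum_succ, psum_succ, ih]
    unfold pjoin
    rw [pt_transpose, hh_add, hh_transpose, hh_transpose]
    omega

lemma step2 {l m : Ptn} (k p : ℕ) (hk : k % 2 = 0) (hp : 0 < k → p % 2 = 1)
    (hl : ∀ a, a < k → hh l a = p) (hm : ∀ a, k ≤ a → hh m a = 0)
    (hls : l.sum % 2 = 0) (hms : m.sum % 2 = 0) :
    collapse PType.C (transpose (l + m)) =
      pjoin (collapse PType.C (transpose l)) (collapse PType.D (transpose m)) := by
  obtain ⟨a1, a2, a3⟩ := collapse_spec corrC (show (transpose l).sum % 2 = 0 by rw [transpose_sum]; exact hls)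
  obtain ⟨b1, b2, b3⟩ := collapse_spec corrD (show (transpose m).sum % 2 = 0 by rw [transpose_sum]; exact hms)
  apply collapse_eq corrC
  · rw [transpose_sum, Multiset.sum_add]; omega
  · exact transpose_isPartition _
  have hpt : ∀ i, pt (transpose (l+m)) i = pt (transpose l) i + pt (transpose m) i := by
    intro i
    rw [pt_transpose, pt_transpose, pt_transpose, hh_add]
  have hps : ∀ j, psum (transpose (l+m)) j = psum (transpose l) j + psum (transpose m) j := by
    intro j
    induction j with
    | zero => simp [psum_zero]
    | succ j ih => rw [psum_succ, psum_succ, psum_succ, ih, hpt]; omega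
  have hl' : ∀ a, a < k → pt (transpose l) a = p := by rw [pt_transpose]; exact hl
  have hm' : ∀ a, k ≤ a → pt (transpose m) a = 0 := by rw [pt_transpose]; exact hm
  have hlk : ∀ j, j ≤ k → psum (transpose l) j % 2 = j % 2 := by
    intro j
    induction j with
    | zero => intro _; rw [psum_zero]
    | succ j ih =>
      intro hj
      rw [psum_succ, hl' j (by omega)]
      have := ih (by omega)
      have := hp (by omega)
      omega
  have hmk : ∀ j, k ≤ j → psum (transpose m) j = m.sum := by
    intro j hj
    rw [psum_hh0, transpose_sum]
    by_contra hc
    have := (galois (transpose m) 0 j).1 (by omega)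
    have := hm' j hj
    omega
  intro j
  rw [psum_pjoin, hps]
  have a3j := a3 j
  have b3j := b3 j
  suffices h : dec 0 (transpose (l+m)) j = dec 0 (transpose l) j + dec 1 (transpose m) j by omega
  unfold dec
  rw [W0, W0, hps, hpt, hpt]
  have hw : W 1 (transpose m) j = psum (transpose m) j + j := by simp [W]
  rw [hw]
  rcases lt_trichotomy j k with hj | hj | hj
  · have q1 := hl' j hj
    have q2 := hl' (j-1) (by omega)
    have q3 := hlk j (by omega)
    have q4 := hp (by omega)
    rw [q1, q2]
    split_ifs <;> omega
  · have q3 := hlk j (by omega)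
    have q5 := hmk j (by omega)
    rw [if_neg (by omega), if_neg (by omega), if_neg (by omega)]
  · have q1 := hm' j (by omega)
    have q2 := hm' (j-1) (by omega)
    have q5 := hmk j (by omega)
    rw [q1, q2]
    split_ifs <;> omega

lemma sum_mod_card (l : Ptn) (h : ∀ a ∈ l, a % 2 = 1) : l.sum % 2 = Multiset.card l % 2 := by
  induction l using Multiset.induction with
  | empty => simp
  | cons x m ih =>
    have h1 := h x (Multiset.mem_cons_self x m)
    have h2 := ih (fun a ha => h a (Multiset.mem_cons_of_mem ha))
    rw [Multiset.sum_cons, Multiset.card_cons]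
    omega

lemma hh_full (l : Ptn) (k : ℕ) (h : ∀ a ∈ l, k ≤ a) (a : ℕ) (ha : a < k) :
    hh l a = Multiset.card l := by
  unfold hh height
  rw [Multiset.filter_eq_self.2]
  intro b hb
  have := h b hb
  omega

lemma hh_none (l : Ptn) (k : ℕ) (h : ∀ a ∈ l, a ≤ k) (a : ℕ) (ha : k ≤ a) : hh l a = 0 := by
  unfold hh height
  rw [Multiset.card_eq_zero, Multiset.filter_eq_nil]
  intro b hb
  have := h b hb
  omega

lemma corrB : Corr PType.B 1 := by
  intro a; simp only [badPart, Nat.even_iff]; omega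

/-- Lemma 4.5 of the paper (for `d_S`): the union of a type-B marked partition and a
type-D marked partition, with the former evenly superior, is a type-B marked partition,
and `d_S` of the union is the join of the `d_S` values. -/
theorem dS_of_B_D_union (nu1 eta1 nu2 eta2 : Ptn)
    (h1 : IsMarked PType.B nu1 eta1) (h2 : IsMarked PType.D nu2 eta2)
    (hsup : EvenlySuperior (nu1 + eta1) (nu2 + eta2)) :
    IsMarked PType.B (nu1 + nu2) (eta1 + eta2) ∧
    dS PType.B (nu1 + nu2) (eta1 + eta2) =
      pjoin (dS PType.B nu1 eta1) (dS PType.D nu2 eta2) := by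
  obtain ⟨k, hk, hk2, hk1⟩ := hsup
  rw [Nat.even_iff] at hk
  obtain ⟨⟨hp1, hc1⟩, hs1, hn1, hcard1⟩ := h1
  obtain ⟨⟨hp2, hc2⟩, hs2, hn2, hcard2⟩ := h2
  have hcard1 := hcard1 (Or.inl rfl)
  have hcard2 := hcard2 (Or.inr rfl)
  have hmin : ∀ a ∈ nu1 + eta1, k ≤ a := fun a ha => hk1.trans (Nat.sInf_le ha)
  have hmax : ∀ a ∈ nu2 + eta2, a ≤ k := fun a ha => (Multiset.le_sup ha).trans hk2
  have hodd1 : ∀ a ∈ nu1, a % 2 = 1 := fun a ha => Nat.odd_iff.1 (hn1 a ha).2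
  have hodd2 : ∀ a ∈ nu2, a % 2 = 1 := fun a ha => Nat.odd_iff.1 (hn2 a ha).2
  have m1 : ∀ a ∈ nu1, a ∈ nu1 + eta1 := fun a ha => Multiset.mem_add.2 (Or.inl ha)
  have m1' : ∀ a ∈ eta1, a ∈ nu1 + eta1 := fun a ha => Multiset.mem_add.2 (Or.inr ha)
  have m2 : ∀ a ∈ nu2, a ∈ nu2 + eta2 := fun a ha => Multiset.mem_add.2 (Or.inl ha)
  have m2' : ∀ a ∈ eta2, a ∈ nu2 + eta2 := fun a ha => Multiset.mem_add.2 (Or.inr ha)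
  have hre : nu1 + nu2 + (eta1 + eta2) = (nu1 + eta1) + (nu2 + eta2) :=
    add_add_add_comm _ _ _ _
  have hs1' : (nu1 + eta1).sum % 2 = 1 := Nat.odd_iff.1 hs1
  have hs2' : (nu2 + eta2).sum % 2 = 0 := Nat.even_iff.1 hs2
  refine ⟨⟨⟨?_, ?_⟩, ?_, ?_, ?_⟩, ?_⟩
  · rw [hre]
    intro a ha
    rcases Multiset.mem_add.1 ha with h | h
    · exact hp1 a h
    · exact hp2 a h
  · intro a ha
    rw [hre, Multiset.count_add]
    exact (hc1 a ha).add (hc2 a ha)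
  · rw [hre, Multiset.sum_add]
    show Odd _
    rw [Nat.odd_iff]
    omega
  · intro a ha
    rw [Multiset.count_add]
    have hnot : a ∈ nu1 → a ∈ nu2 → False := by
      intro h h'
      have e1 := hmin a (m1 a h)
      have e2 := hmax a (m2 a h')
      have e3 := hodd1 a h
      omega
    rcases Multiset.mem_add.1 ha with h | h
    · rw [Multiset.count_eq_zero_of_notMem (hnot h), (hn1 a h).1]
      exact ⟨rfl, (hn1 a h).2⟩
    · rw [Multiset.count_eq_zero_of_notMem (fun h' => hnot h' h), (hn2 a h).1]
      exact ⟨rfl, (hn2 a h).2⟩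
  · intro _
    rw [Multiset.card_add]
    exact hcard1.add hcard2
  · rw [Nat.even_iff] at hcard1 hcard2
    have sn1 := sum_mod_card nu1 hodd1
    have sn2 := sum_mod_card nu2 hodd2
    rw [Multiset.sum_add] at hs1' hs2'
    have hpe1 : IsPartition eta1 := fun a ha => hp1 a (m1' a ha)
    have hpe2 : InP PType.D eta2 := by
      refine ⟨fun a ha => hp2 a (m2' a ha), ?_⟩
      intro a ha
      have h3 := hc2 a ha
      rw [Multiset.count_add, Multiset.count_eq_zero_of_notMem, zero_add] at h3
      · exact h3
      · intro h
        have h4 := hodd2 a h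
        have h5 : Even a := ha
        rw [Nat.even_iff] at h5
        omega
    have hh1 := hh_zero_card eta1 hpe1
    have hmin1 : ∀ a, a < k → hh eta1 a = hh eta1 0 := by
      intro a ha
      rw [hh1]
      exact hh_full eta1 k (fun b hb => hmin b (m1' b hb)) a ha
    have hmax2 := hh_none eta2 k (fun b hb => hmax b (m2' b hb))
    obtain ⟨s1, s2⟩ := step1 hpe1 (by omega) k hk hmin1 hpe2 (by omega) hmax2
    obtain ⟨_, r1⟩ := R1_spec hpe1 (by omega) k hk hmin1
    have he0 : eta1 ≠ 0 := by rintro rfl; simp at hs1'; omega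
    have hds := down_sum hpe1 he0
    obtain ⟨_, g2, _⟩ := collapse_spec corrC (show (down eta1).sum % 2 = 0 by omega)
    obtain ⟨_, g3, _⟩ := collapse_spec corrD
      (show (transpose eta2).sum % 2 = 0 by rw [transpose_sum]; omega)
    have hcardP : Multiset.card (nu1 + eta1) % 2 = 1 := by
      have h3 := W_corner_of_InP corrB (l := nu1 + eta1) ⟨hp1, hc1⟩ 0
      unfold W at h3
      rw [psum_hh0 _ _ le_rfl, hh_zero_card _ hp1, Multiset.sum_add] at h3
      omega
    rw [Multiset.card_add] at hcardP
    show collapse PType.C (transpose (nu1 + nu2 + collapse PType.C (down (eta1 + eta2)))) =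
      pjoin (collapse PType.C (transpose (nu1 + collapse PType.C (down eta1))))
        (collapse PType.D (transpose (nu2 + transpose (collapse PType.D (transpose eta2)))))
    rw [s2, add_add_add_comm]
    apply step2 k (Multiset.card nu1 + Multiset.card eta1) hk (fun _ => hcardP)
    · intro a ha
      rw [hh_add, r1 a ha, hh1, hh_full nu1 k (fun b hb => hmin b (m1 b hb)) a ha]
    · intro a ha
      rw [hh_add, s1 a ha, hh_none nu2 k (fun b hb => hmax b (m2 b hb)) a ha]
    · rw [Multiset.sum_add, g2]; omega
    · rw [Multiset.sum_add, transpose_sum, g3, transpose_sum]; omega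

end NilDual
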